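/- (Theorem 3, upper bound: linear-in-time bound on the achievable squeezing.) Let ω > 0, let G = sup_{x ∈ (0,π)} [−ln(cos(x/2)) / (tan(x/2) + π − x/2)], and let C = sup_{u ∈ (0, π/2)} (−ln(cos u) − G·tan u). Then for every Φ > 0 and every measurable f : [0, Φ] → ℝ satisfying 1/(2ω) ≤ f(φ) and 2ω·f(φ)·cos²(φ/2) ≤ 1 for almost every φ ∈ [0, Φ], and such that f and (2ω·f(φ) − 1)·cot(φ/2) are integrable on [0, Φ], the squeezing functional satisfies ∫₀^Φ (2ω·f(φ) − 1)·(cot(φ/2)/2) dφ ≤ G·ω·∫₀^Φ f(φ) dφ + C. -/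

import Mathlib

open Real MeasureTheory intervalIntegral

/-- The optimal squeezing rate `G = sup_{x ∈ (0,π)} −ln(cos(x/2))/(tan(x/2) + π − x/2)`
(equal to `Γ/4 ≈ 0.2436`). -/
noncomputable def optimalRate : ℝ :=
  sSup ((fun x : ℝ => -Real.log (Real.cos (x / 2)) / (Real.tan (x / 2) + π - x / 2)) ''
    Set.Ioo 0 π)

/-- The additive constant `C = sup_{u ∈ (0, π/2)} (−ln(cos u) − G·tan u)`. -/
noncomputable def additiveConst : ℝ :=
  sSup ((fun u : ℝ => -Real.log (Real.cos u) - optimalRate * Real.tan u) ''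
    Set.Ioo 0 (π / 2))

/-!
With `u = φ / 2` and `g = 2ωf - 1`, the constraints read `0 ≤ g ≤ tan² u`, and charging a price `G`
per unit of time `ωf` leaves an integrand linear in `g`, namely `g (cot u - G) - G`. Its pointwise
maximum is attained at an endpoint: `g = tan² u` up to `u = arccot G`, and `g = 0` from there to
`π`. This maximum has period `π` and integrates to `-log (cos v) - G tan v` up to `v ≤ arccot G`,
and over a whole period to `-log (cos α) - G (tan α + π - α)` with `α = arccot G`. The first is at
most `C` by the choice of `C`, the second is nonpositive by the choice of `G`; so the integral of
the maximum over any `[0, v]` is at most `C`.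
-/

lemma inv_cos_le_one_add_tan {u : ℝ} (hu : u ∈ Set.Ico 0 (π / 2)) :
    (cos u)⁻¹ ≤ 1 + tan u := by
  have hcos : 0 < cos u := cos_pos_of_mem_Ioo ⟨by linarith [pi_pos, hu.1], hu.2⟩
  have hsin : 0 ≤ sin u := sin_nonneg_of_nonneg_of_le_pi hu.1 (by linarith [pi_pos, hu.2])
  have h_one_le : 1 ≤ cos u + sin u := by
    nlinarith [sin_sq_add_cos_sq u, sin_le_one u, cos_le_one u]
  calc (cos u)⁻¹ ≤ (cos u + sin u) / cos u := by
        rw [inv_eq_one_div]; gcongr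
    _ = 1 + tan u := by rw [add_div, div_self hcos.ne', tan_eq_sin_div_cos]

lemma neg_log_cos_le {u a : ℝ} (ha : 0 < a) (hu : u ∈ Set.Ico 0 (π / 2)) :
    -log (cos u) ≤ a * tan u + (a - 1 - log a) := by
  have hcos : 0 < cos u := cos_pos_of_mem_Ioo ⟨by linarith [pi_pos, hu.1], hu.2⟩
  have hlog : log a - log (cos u) ≤ a * (cos u)⁻¹ - 1 := by
    rw [← log_div ha.ne' hcos.ne', ← div_eq_mul_inv]
    exact log_le_sub_one_of_pos (div_pos ha hcos)
  have hmul := mul_le_mul_of_nonneg_left (inv_cos_le_one_add_tan hu) ha.le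
  linarith

lemma arctan_cot {u : ℝ} (hu : u ∈ Set.Ioo 0 π) : arctan (cot u) = π / 2 - u := by
  rw [← tan_inv_eq_cot, ← tan_pi_div_two_sub,
    arctan_tan (by linarith [hu.2]) (by linarith [hu.1])]

lemma tan_add_pi_sub_pos {u : ℝ} (hu : u ∈ Set.Ioo 0 (π / 2)) : 0 < tan u + π - u := by
  linarith [tan_pos_of_pos_of_lt_pi_div_two hu.1 hu.2, hu.2, pi_pos]

lemma bddAbove_optimalRate_image :
    BddAbove ((fun x : ℝ => -log (cos (x / 2)) / (tan (x / 2) + π - x / 2)) '' Set.Ioo 0 π) := by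
  refine ⟨1, ?_⟩
  rintro _ ⟨x, hx, rfl⟩
  have hu : x / 2 ∈ Set.Ioo 0 (π / 2) := ⟨half_pos hx.1, by linarith [hx.2]⟩
  have hlog := neg_log_cos_le one_pos (Set.Ioo_subset_Ico_self hu)
  rw [log_one] at hlog
  refine (div_le_one (tan_add_pi_sub_pos hu)).2 ?_
  linarith [hx.2, pi_pos]

lemma neg_log_cos_div_le_optimalRate {u : ℝ} (hu : u ∈ Set.Ioo 0 (π / 2)) :
    -log (cos u) / (tan u + π - u) ≤ optimalRate := by
  refine le_csSup bddAbove_optimalRate_image ⟨2 * u, ⟨by linarith [hu.1], by linarith [hu.2]⟩, ?_⟩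
  simp only [mul_div_cancel_left₀ u two_ne_zero]

lemma optimalRate_pos : 0 < optimalRate := by
  have hu : π / 4 ∈ Set.Ioo 0 (π / 2) := ⟨by positivity, by linarith [pi_pos]⟩
  have hcos_pos : 0 < cos (π / 4) := cos_pos_of_mem_Ioo ⟨by linarith [pi_pos], hu.2⟩
  have hcos_lt : cos (π / 4) < 1 := by
    rw [← cos_zero]
    exact cos_lt_cos_of_nonneg_of_le_pi_div_two le_rfl hu.2.le hu.1
  exact (div_pos (neg_pos.2 (log_neg hcos_pos hcos_lt)) (tan_add_pi_sub_pos hu)).trans_le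
    (neg_log_cos_div_le_optimalRate hu)

lemma neg_log_cos_sub_le_additiveConst {u : ℝ} (hu : u ∈ Set.Ioo 0 (π / 2)) :
    -log (cos u) - optimalRate * tan u ≤ additiveConst := by
  refine le_csSup ⟨optimalRate - 1 - log optimalRate, ?_⟩ ⟨u, hu, rfl⟩
  rintro _ ⟨x, hx, rfl⟩
  exact sub_le_iff_le_add'.2 (neg_log_cos_le optimalRate_pos (Set.Ioo_subset_Ico_self hx))

lemma intervalIntegral_le_of_periodic {g : ℝ → ℝ} {T K v : ℝ} (hg : Function.Periodic g T)
    (hT : 0 < T) (hint : IntervalIntegrable g volume 0 T) (hperiod : ∫ x in (0 : ℝ)..T, g x ≤ 0)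
    (hK : ∀ w ∈ Set.Ioc 0 T, ∫ x in (0 : ℝ)..w, g x ≤ K) (hv : 0 < v) :
    ∫ x in (0 : ℝ)..v, g x ≤ K := by
  have hint' := hg.intervalIntegrable₀ hT.ne' hint
  set w := toIocMod hT 0 v
  set n := toIocDiv hT 0 v
  have hw : w ∈ Set.Ioc 0 T := by simpa using toIocMod_mem_Ioc hT 0 v
  have hvw : w + n • T = v := toIocMod_add_toIocDiv_zsmul hT 0 v
  have hn : 0 ≤ n := by
    by_contra! hneg
    have : n • T ≤ (-1 : ℤ) • T := zsmul_le_zsmul_left hT.le (by lia)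
    rw [neg_one_zsmul] at this
    linarith [hw.2]
  calc ∫ x in (0 : ℝ)..v, g x
      = (∫ x in (0 : ℝ)..w, g x) + n • ∫ x in (0 : ℝ)..T, g x := by
        rw [← integral_add_adjacent_intervals (hint' 0 w) (hint' w v), ← hvw,
          hg.intervalIntegral_add_zsmul_eq n w hint', hg.intervalIntegral_add_eq w 0, zero_add]
    _ ≤ K + 0 := add_le_add (hK w hw) (smul_nonpos_of_nonneg_of_nonpos hn hperiod)
    _ = K := add_zero K

/-- The largest value of the net gain `g * cot u - G * (1 + g)` (squeezing minus time charged at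
the price `G`) over the admissible range `0 ≤ g ≤ tan² u`. Here `u = φ / 2` and `g = 2ωf - 1`. -/
noncomputable def maxNetGain (G u : ℝ) : ℝ := tan u ^ 2 * max (cot u - G) 0 - G

/-- The angle `arccot G ∈ (0, π)` at which the maximizer in `maxNetGain G` switches from
`g = tan² u` to `g = 0`. -/
noncomputable def switchingAngle (G : ℝ) : ℝ := π / 2 - arctan G

section MaxNetGain

variable {G u v : ℝ}

-- Where `cos u = 0` there is no upper bound on `g`, but there `cot u = 0` makes `g` unprofitable.
lemma mul_cot_sub_le_maxNetGain {g : ℝ} (hG : 0 ≤ G) (hg : 0 ≤ g)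
    (hgu : (1 + g) * cos u ^ 2 ≤ 1) : g * cot u - G * (1 + g) ≤ maxNetGain G u := by
  rcases eq_or_ne (cos u) 0 with hcos | hcos
  · have hGg : 0 ≤ G * g := mul_nonneg hG hg
    simp only [maxNetGain, cot_eq_cos_div_sin, tan_eq_sin_div_cos, hcos, zero_div, div_zero]
    linarith
  · have hg_le : g ≤ tan u ^ 2 := by
      have : 1 + g ≤ 1 + tan u ^ 2 := by
        rw [← inv_inv (1 + tan u ^ 2), inv_one_add_tan_sq hcos, ← one_div]
        exact (le_div_iff₀ (by positivity)).2 hgu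
      linarith
    have hmax : g * (cot u - G) ≤ tan u ^ 2 * max (cot u - G) 0 :=
      (mul_le_mul_of_nonneg_left (le_max_left _ 0) hg).trans
        (mul_le_mul_of_nonneg_right hg_le (le_max_right _ _))
    unfold maxNetGain
    linarith

lemma maxNetGain_of_cot_le (h : cot u ≤ G) : maxNetGain G u = -G := by
  rw [maxNetGain, max_eq_right (sub_nonpos.2 h), mul_zero, zero_sub]

lemma maxNetGain_of_le_cot (h : G ≤ cot u) : maxNetGain G u = tan u - G * (1 + tan u ^ 2) := by
  have htan : tan u ^ 2 * cot u = tan u := by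
    rw [← tan_inv_eq_cot, sq, mul_self_mul_inv]
  rw [maxNetGain, max_eq_left (sub_nonneg.2 h), mul_sub, htan]
  ring

lemma neg_le_maxNetGain (G u : ℝ) : -G ≤ maxNetGain G u := by
  have : 0 ≤ tan u ^ 2 * max (cot u - G) 0 := by positivity
  unfold maxNetGain
  linarith

lemma maxNetGain_le_inv (hG : 0 < G) (u : ℝ) : maxNetGain G u ≤ G⁻¹ := by
  rcases le_total (cot u) G with h | h
  · rw [maxNetGain_of_cot_le h]
    linarith [inv_pos.2 hG]
  · have htan : tan u ≤ G⁻¹ := by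
      rw [← cot_inv_eq_tan]
      exact inv_anti₀ hG h
    rw [maxNetGain_of_le_cot h]
    linarith [show 0 ≤ G * (1 + tan u ^ 2) by positivity]

lemma measurable_maxNetGain (G : ℝ) : Measurable (maxNetGain G) := by
  unfold maxNetGain
  simp only [tan_eq_sin_div_cos, cot_eq_cos_div_sin]
  fun_prop

lemma periodic_maxNetGain (G : ℝ) : Function.Periodic (maxNetGain G) π := fun u => by
  simp only [maxNetGain, ← tan_inv_eq_cot, tan_periodic u]

lemma intervalIntegrable_maxNetGain (hG : 0 < G) (a b : ℝ) :
    IntervalIntegrable (maxNetGain G) volume a b := by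
  refine (intervalIntegrable_const (c := G + G⁻¹)).mono_fun'
    (measurable_maxNetGain G).aestronglyMeasurable (.of_forall fun u => abs_le.2 ⟨?_, ?_⟩)
  · linarith [neg_le_maxNetGain G u, inv_pos.2 hG]
  · linarith [maxNetGain_le_inv hG u]

lemma switchingAngle_pos (G : ℝ) : 0 < switchingAngle G :=
  sub_pos.2 (arctan_lt_pi_div_two G)

lemma switchingAngle_lt_pi_div_two (hG : 0 < G) : switchingAngle G < π / 2 :=
  sub_lt_self _ (arctan_pos.2 hG)

lemma cot_le_iff_switchingAngle_le (hu : u ∈ Set.Ioo 0 π) :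
    cot u ≤ G ↔ switchingAngle G ≤ u := by
  rw [← arctan_le_arctan_iff, arctan_cot hu, switchingAngle, sub_le_comm]

lemma hasDerivAt_neg_log_cos_sub_mul_tan (G : ℝ) (hu : cos u ≠ 0) :
    HasDerivAt (fun x => -log (cos x) - G * tan x) (tan u - G * (1 + tan u ^ 2)) u := by
  refine (((hasDerivAt_cos u).log hu).neg.sub ((hasDerivAt_tan hu).const_mul G)).congr_deriv ?_
  rw [neg_div, neg_neg, ← tan_eq_sin_div_cos, one_div, ← inv_one_add_tan_sq hu, inv_inv]

lemma integral_maxNetGain_of_le_switchingAngle (hG : 0 < G) (hv₀ : 0 ≤ v)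
    (hv : v ≤ switchingAngle G) :
    ∫ u in (0 : ℝ)..v, maxNetGain G u = -log (cos v) - G * tan v := by
  have hv_lt : v < π / 2 := hv.trans_lt (switchingAngle_lt_pi_div_two hG)
  have hderiv : ∀ u ∈ Set.Icc 0 v, HasDerivAt (fun x => -log (cos x) - G * tan x)
      (tan u - G * (1 + tan u ^ 2)) u := fun u hu =>
    hasDerivAt_neg_log_cos_sub_mul_tan G
      (cos_pos_of_mem_Ioo ⟨by linarith [pi_pos, hu.1], hu.2.trans_lt hv_lt⟩).ne'
  have hgain : ∀ u ∈ Set.Ioo 0 v, maxNetGain G u = tan u - G * (1 + tan u ^ 2) := fun u hu => by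
    refine maxNetGain_of_le_cot (le_of_not_ge fun hcot => ?_)
    have hu_pi : u ∈ Set.Ioo 0 π := ⟨hu.1, by linarith [pi_pos, hu.2]⟩
    exact (hu.2.trans_le hv).not_ge ((cot_le_iff_switchingAngle_le hu_pi).1 hcot)
  rw [integral_eq_sub_of_hasDerivAt_of_le hv₀
    (fun u hu => (hderiv u hu).continuousAt.continuousWithinAt)
    (fun u hu => hgain u hu ▸ hderiv u (Set.Ioo_subset_Icc_self hu))
    (intervalIntegrable_maxNetGain hG 0 v)]
  simp

lemma integral_maxNetGain_of_switchingAngle_le (hG : 0 < G) (hv : switchingAngle G ≤ v)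
    (hv_pi : v ≤ π) :
    ∫ u in (0 : ℝ)..v, maxNetGain G u =
      -log (cos (switchingAngle G)) - G * (tan (switchingAngle G) + v - switchingAngle G) := by
  have htail : ∫ u in switchingAngle G..v, maxNetGain G u = ∫ _ in switchingAngle G..v, -G := by
    refine integral_congr_uIoo fun u hu => ?_
    rw [Set.uIoo_of_le hv] at hu
    have hu_pi : u ∈ Set.Ioo 0 π :=
      ⟨(switchingAngle_pos G).trans hu.1, hu.2.trans_le hv_pi⟩
    exact maxNetGain_of_cot_le ((cot_le_iff_switchingAngle_le hu_pi).2 hu.1.le)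
  rw [← integral_add_adjacent_intervals (intervalIntegrable_maxNetGain hG 0 (switchingAngle G))
      (intervalIntegrable_maxNetGain hG _ v),
    integral_maxNetGain_of_le_switchingAngle hG (switchingAngle_pos G).le le_rfl, htail,
    intervalIntegral.integral_const, smul_eq_mul]
  ring

lemma integral_maxNetGain_le {K : ℝ} (hG : 0 < G)
    (hrate : -log (cos (switchingAngle G)) ≤
      G * (tan (switchingAngle G) + π - switchingAngle G))
    (hK : ∀ u ∈ Set.Ioo 0 (π / 2), -log (cos u) - G * tan u ≤ K) (hv : 0 < v) :
    ∫ u in (0 : ℝ)..v, maxNetGain G u ≤ K := by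
  have hα := switchingAngle_lt_pi_div_two hG
  refine intervalIntegral_le_of_periodic (periodic_maxNetGain G) pi_pos
    (intervalIntegrable_maxNetGain hG 0 π) ?_ (fun w hw => ?_) hv
  · rw [integral_maxNetGain_of_switchingAngle_le hG (by linarith [pi_pos]) le_rfl]
    exact sub_nonpos.2 hrate
  · rcases le_total w (switchingAngle G) with hle | hle
    · rw [integral_maxNetGain_of_le_switchingAngle hG hw.1.le hle]
      exact hK w ⟨hw.1, hle.trans_lt hα⟩
    · rw [integral_maxNetGain_of_switchingAngle_le hG hle hw.2]
      have htail : 0 ≤ G * (w - switchingAngle G) := mul_nonneg hG.le (sub_nonneg.2 hle)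
      linarith [hK _ ⟨switchingAngle_pos G, hα⟩]

lemma integral_maxNetGain_optimalRate_le (hv : 0 < v) :
    ∫ u in (0 : ℝ)..v, maxNetGain optimalRate u ≤ additiveConst := by
  have hα : switchingAngle optimalRate ∈ Set.Ioo 0 (π / 2) :=
    ⟨switchingAngle_pos _, switchingAngle_lt_pi_div_two optimalRate_pos⟩
  exact integral_maxNetGain_le optimalRate_pos
    ((div_le_iff₀ (tan_add_pi_sub_pos hα)).1 (neg_log_cos_div_le_optimalRate hα))
    (fun _ => neg_log_cos_sub_le_additiveConst) hv

lemma integral_squeezing_le {ω Φ : ℝ} {f : ℝ → ℝ} (hG : 0 < G) (hω : 0 < ω) (hΦ : 0 ≤ Φ)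
    (hbd : ∀ᵐ φ ∂(volume.restrict (Set.Icc 0 Φ)),
      1 / (2 * ω) ≤ f φ ∧ 2 * ω * f φ * cos (φ / 2) ^ 2 ≤ 1)
    (hfi : IntervalIntegrable f volume 0 Φ)
    (hri : IntervalIntegrable (fun φ => (2 * ω * f φ - 1) * (cot (φ / 2) / 2)) volume 0 Φ) :
    ∫ φ in (0 : ℝ)..Φ, (2 * ω * f φ - 1) * (cot (φ / 2) / 2) ≤
      G * ω * (∫ φ in (0 : ℝ)..Φ, f φ) + ∫ u in (0 : ℝ)..Φ / 2, maxNetGain G u := by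
  have hgain : IntervalIntegrable (fun φ => maxNetGain G (φ / 2) / 2) volume 0 Φ := by
    have h := (intervalIntegrable_maxNetGain hG 0 (Φ / 2)).comp_mul_right (c := 2⁻¹)
    simpa [← div_eq_mul_inv] using h.div_const 2
  have hpointwise : ∀ᵐ φ ∂(volume.restrict (Set.Icc 0 Φ)),
      (2 * ω * f φ - 1) * (cot (φ / 2) / 2) ≤ G * ω * f φ + maxNetGain G (φ / 2) / 2 := by
    filter_upwards [hbd] with φ ⟨hlower, hupper⟩
    rw [div_le_iff₀ (by positivity)] at hlower
    have hmax := mul_cot_sub_le_maxNetGain (g := 2 * ω * f φ - 1) (u := φ / 2) hG.le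
      (by linarith) (by rwa [add_sub_cancel])
    linarith
  calc ∫ φ in (0 : ℝ)..Φ, (2 * ω * f φ - 1) * (cot (φ / 2) / 2)
      ≤ ∫ φ in (0 : ℝ)..Φ, (G * ω * f φ + maxNetGain G (φ / 2) / 2) :=
        integral_mono_ae_restrict hΦ hri ((hfi.const_mul _).add hgain) hpointwise
    _ = G * ω * (∫ φ in (0 : ℝ)..Φ, f φ) + ∫ u in (0 : ℝ)..Φ / 2, maxNetGain G u := by
        rw [intervalIntegral.integral_add (hfi.const_mul _) hgain,
          intervalIntegral.integral_const_mul, intervalIntegral.integral_div,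
          intervalIntegral.integral_comp_div _ two_ne_zero, zero_div, smul_eq_mul,
          mul_div_cancel_left₀ _ two_ne_zero]

end MaxNetGain

/-- Theorem 3, upper bound: for every `Φ > 0` and every measurable
`f : [0,Φ] → ℝ` with `1/(2ω) ≤ f(φ)` and `2ω·f(φ)·cos²(φ/2) ≤ 1` a.e. on `[0,Φ]`,
such that `f` and `(2ω·f − 1)·cot(φ/2)` are integrable on `[0,Φ]`, the achieved
squeezing satisfies `∫₀^Φ (2ω·f − 1)·cot(φ/2)/2 dφ ≤ G·ω·∫₀^Φ f dφ + C`. -/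
theorem linear_in_time_squeezing_bound
    (ω : ℝ) (hω : 0 < ω) (Φ : ℝ) (hΦ : 0 < Φ) (f : ℝ → ℝ) (hf : Measurable f)
    (hbd : ∀ᵐ φ ∂(volume.restrict (Set.Icc 0 Φ)),
      1 / (2 * ω) ≤ f φ ∧ 2 * ω * f φ * Real.cos (φ / 2) ^ 2 ≤ 1)
    (hfi : IntegrableOn f (Set.Icc 0 Φ))
    (hri : IntegrableOn (fun φ => (2 * ω * f φ - 1) * Real.cot (φ / 2)) (Set.Icc 0 Φ)) :
    ∫ φ in (0:ℝ)..Φ, (2 * ω * f φ - 1) * (Real.cot (φ / 2) / 2)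
      ≤ optimalRate * ω * (∫ φ in (0:ℝ)..Φ, f φ) + additiveConst := by
  have hfi' : IntervalIntegrable f volume 0 Φ :=
    (intervalIntegrable_iff_integrableOn_Icc_of_le hΦ.le).2 hfi
  have hri' : IntervalIntegrable (fun φ => (2 * ω * f φ - 1) * (cot (φ / 2) / 2)) volume 0 Φ := by
    simpa only [mul_div_assoc] using
      ((intervalIntegrable_iff_integrableOn_Icc_of_le hΦ.le).2 hri).div_const 2
  calc ∫ φ in (0 : ℝ)..Φ, (2 * ω * f φ - 1) * (cot (φ / 2) / 2)
      ≤ optimalRate * ω * (∫ φ in (0 : ℝ)..Φ, f φ)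
          + ∫ u in (0 : ℝ)..Φ / 2, maxNetGain optimalRate u :=
        integral_squeezing_le optimalRate_pos hω hΦ.le hbd hfi' hri'
    _ ≤ optimalRate * ω * (∫ φ in (0 : ℝ)..Φ, f φ) + additiveConst := by
        gcongr
        exact integral_maxNetGain_optimalRate_le (half_pos hΦ)
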